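/- arXiv:0807.1543 — 4 statements merged into one kernel-verified Lean document; each statement's English description precedes it below -/
import Mathlib

section
/- Let H₁, H₂, H₃ be real n×n matrices with H₁ invertible, let S₁ and S₂ be symmetric positive semidefinite real n×n matrices, let Σ₁ be a symmetric positive definite real n×n matrix, and set A₁ := (I + H₂S₂H₂ᵀ) H₁⁻ᵀ H₃ᵀ, where H₁⁻ᵀ denotes the transpose of H₁⁻¹. Then the following determinant identity holds: det(H₃S₁H₃ᵀ + Σ₁) · det( I + H₁S₁H₁ᵀ + H₂S₂H₂ᵀ − (H₁S₁H₃ᵀ + A₁)(H₃S₁H₃ᵀ + Σ₁)⁻¹(H₃S₁H₁ᵀ + A₁ᵀ) ) = det(Σ₁) · det( I + H₂S₂H₂ᵀ − A₁ Σ₁⁻¹ A₁ᵀ ) · det( I + H₁S₁H₁ᵀ (I + H₂S₂H₂ᵀ)⁻¹ ). (Note that H₃S₁H₃ᵀ + Σ₁ and I + H₂S₂H₂ᵀ are positive definite, hence invertible.) -/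
/-!
Let `X = H₁ * S₁ * H₁ᵀ`, `K = 1 + H₂ * S₂ * H₂ᵀ` and `L = H₃ * H₁⁻¹`. Then `A₁ = K * Lᵀ`, and
`M = H₃ * S₁ * H₃ᵀ + G₁` is `L * X * Lᵀ + G₁`, so both Schur complements of the theorem have the
shape `Q - Q * Lᵀ * N⁻¹ * (L * Q)`: with `Q = K + X`, `N = M` on the left and `Q = K`, `N = G₁` on
the right. The Weinstein–Aronszajn identity turns the determinant of such a complement, times
`N.det`, into `Q.det * (N - L * Q * Lᵀ).det`. The signal `X` cancels in `M - L * (K + X) * Lᵀ`,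
which therefore equals `G₁ - L * K * Lᵀ`, and the only discrepancy left is the ratio
`(K + X).det / K.det = (1 + X * K⁻¹).det`.
-/

open Matrix

section CommRing

variable {m n R : Type*} [Fintype m] [DecidableEq m] [Fintype n] [DecidableEq n] [CommRing R]

theorem det_mul_det_sub_mul_inv_mul {N : Matrix m m R} (hN : IsUnit N)
    (Q : Matrix n n R) (B : Matrix n m R) (C : Matrix m n R) :
    N.det * (Q - Q * B * N⁻¹ * (C * Q)).det = Q.det * (N - C * Q * B).det := by
  have factor_left : Q - Q * B * N⁻¹ * (C * Q) = Q * (1 - B * (N⁻¹ * (C * Q))) := by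
    simp only [Matrix.mul_sub, Matrix.mul_one, Matrix.mul_assoc]
  have factor_right : N - C * Q * B = N * (1 - N⁻¹ * (C * Q) * B) := by
    rw [Matrix.mul_sub, Matrix.mul_one, Matrix.mul_assoc N⁻¹,
      mul_nonsing_inv_cancel_left _ _ ((isUnit_iff_isUnit_det N).mp hN)]
  rw [factor_left, factor_right, det_mul, det_mul, det_one_sub_mul_comm, mul_left_comm]

theorem det_add_eq_det_mul_det_one_add_mul_inv {K : Matrix n n R} (hK : IsUnit K)
    (X : Matrix n n R) : (K + X).det = K.det * (1 + X * K⁻¹).det := by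
  rw [mul_comm K.det, ← det_mul, Matrix.add_mul, Matrix.one_mul,
    nonsing_inv_mul_cancel_right _ _ ((isUnit_iff_isUnit_det K).mp hK)]

theorem det_mul_det_add_sub_mul_inv_mul {G : Matrix m m R} {K X : Matrix n n R}
    {B : Matrix n m R} {C : Matrix m n R}
    (hG : IsUnit G) (hK : IsUnit K) (hM : IsUnit (C * X * B + G)) :
    (C * X * B + G).det *
      (K + X - (K + X) * B * (C * X * B + G)⁻¹ * (C * (K + X))).det =
    G.det * (K - K * B * G⁻¹ * (C * K)).det * (1 + X * K⁻¹).det := by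
  have signal_cancels : C * X * B + G - C * (K + X) * B = G - C * K * B := by
    rw [Matrix.mul_add, Matrix.add_mul]
    abel
  rw [det_mul_det_sub_mul_inv_mul hM, det_mul_det_sub_mul_inv_mul hG, signal_cancels,
    det_add_eq_det_mul_det_one_add_mul_inv hK, mul_right_comm]

theorem genie_determinant_identity_general {H₁ S₁ K : Matrix n n R} {H₃ : Matrix m n R}
    {G₁ : Matrix m m R} (hH₁ : IsUnit H₁) (hK : IsUnit K) (hK_symm : K.IsSymm)
    (hG₁ : IsUnit G₁) (hM : IsUnit (H₃ * S₁ * H₃ᵀ + G₁)) :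
    let A₁ : Matrix n m R := K * (H₁⁻¹)ᵀ * H₃ᵀ
    (H₃ * S₁ * H₃ᵀ + G₁).det *
      (K + H₁ * S₁ * H₁ᵀ -
        (H₁ * S₁ * H₃ᵀ + A₁) * (H₃ * S₁ * H₃ᵀ + G₁)⁻¹ * (H₃ * S₁ * H₁ᵀ + A₁ᵀ)).det =
    G₁.det * (K - A₁ * G₁⁻¹ * A₁ᵀ).det * (1 + H₁ * S₁ * H₁ᵀ * K⁻¹).det := by
  intro A₁
  let L := H₃ * H₁⁻¹
  have hH₃ : H₃ = L * H₁ :=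
    (nonsing_inv_mul_cancel_right _ _ ((isUnit_iff_isUnit_det H₁).mp hH₁)).symm
  have hA₁ : A₁ = K * Lᵀ := by rw [transpose_mul, ← Matrix.mul_assoc]
  have hA₁_transpose : A₁ᵀ = L * K := by
    rw [hA₁, transpose_mul, transpose_transpose, hK_symm.eq]
  have cov_genie : H₃ * S₁ * H₃ᵀ = L * (H₁ * S₁ * H₁ᵀ) * Lᵀ := by
    simp only [hH₃, transpose_mul, Matrix.mul_assoc]
  have cross_cov : H₁ * S₁ * H₃ᵀ + A₁ = (K + H₁ * S₁ * H₁ᵀ) * Lᵀ := by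
    rw [hA₁, add_comm, Matrix.add_mul, hH₃, transpose_mul L H₁, ← Matrix.mul_assoc _ H₁ᵀ]
  have cross_cov_transpose : H₃ * S₁ * H₁ᵀ + A₁ᵀ = L * (K + H₁ * S₁ * H₁ᵀ) := by
    rw [hA₁_transpose, add_comm, Matrix.mul_add, hH₃]
    simp only [Matrix.mul_assoc]
  rw [cov_genie] at hM ⊢
  rw [cross_cov, cross_cov_transpose, hA₁_transpose, hA₁]
  exact det_mul_det_add_sub_mul_inv_mul hG₁ hK hM

end CommRing

theorem posSemidef_mul_mul_transpose {m n R : Type*} [Finite m] [Fintype n] [CommRing R]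
    [PartialOrder R] [StarRing R] [TrivialStar R] {S : Matrix n n R} (hS : S.PosSemidef)
    (H : Matrix m n R) : (H * S * Hᵀ).PosSemidef := by
  simpa only [conjTranspose_eq_transpose_of_trivial] using hS.mul_mul_conjTranspose_same H

/-- The central determinant identity in the converse proof of Theorem 1
(noisy-interference sum-rate capacity of the MIMO IC). Here `G₁` plays the role
of `Σ₁` and `A₁ = (I + H₂S₂H₂ᵀ)H₁⁻ᵀH₃ᵀ`. -/
theorem genie_determinant_identity (n : ℕ) (hn : 0 < n)
    (H₁ H₂ H₃ : Matrix (Fin n) (Fin n) ℝ) (hH₁ : IsUnit H₁)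
    (S₁ S₂ G₁ : Matrix (Fin n) (Fin n) ℝ)
    (hS₁ : S₁.PosSemidef) (hS₂ : S₂.PosSemidef) (hG₁ : G₁.PosDef) :
    let A₁ : Matrix (Fin n) (Fin n) ℝ := (1 + H₂ * S₂ * H₂ᵀ) * (H₁⁻¹)ᵀ * H₃ᵀ
    (H₃ * S₁ * H₃ᵀ + G₁).det *
      (1 + H₁ * S₁ * H₁ᵀ + H₂ * S₂ * H₂ᵀ -
        (H₁ * S₁ * H₃ᵀ + A₁) * (H₃ * S₁ * H₃ᵀ + G₁)⁻¹ * (H₃ * S₁ * H₁ᵀ + A₁ᵀ)).det =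
    G₁.det * (1 + H₂ * S₂ * H₂ᵀ - A₁ * G₁⁻¹ * A₁ᵀ).det *
      (1 + H₁ * S₁ * H₁ᵀ * (1 + H₂ * S₂ * H₂ᵀ)⁻¹).det := by
  have hK : (1 + H₂ * S₂ * H₂ᵀ).PosDef :=
    PosDef.one.add_posSemidef (posSemidef_mul_mul_transpose hS₂ H₂)
  have hM : (H₃ * S₁ * H₃ᵀ + G₁).PosDef :=
    PosDef.posSemidef_add (posSemidef_mul_mul_transpose hS₁ H₃) hG₁
  rw [add_right_comm 1 (H₁ * S₁ * H₁ᵀ)]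
  exact genie_determinant_identity_general hH₁ hK.isUnit (isHermitian_iff_isSymm.mp hK.isHermitian)
    hG₁.isUnit hM.isUnit
end

section
/- Let H₂, H₄ be invertible real n×n matrices, let S₂ be a symmetric positive semidefinite real n×n matrix, and set A := I + H₂S₂H₂ᵀ (which is positive definite and invertible). Then there exists a symmetric positive definite real n×n matrix Σ satisfying H₄⁻¹(H₄⁻¹)ᵀ = H₂⁻¹ ( I − A Σ⁻¹ Aᵀ ) (H₂⁻¹)ᵀ if and only if H₄ᵀH₄ − H₂ᵀH₂ is positive definite; in that case Σ = Aᵀ ( I − H₂H₄⁻¹(H₄⁻¹)ᵀH₂ᵀ )⁻¹ A is such a solution. -/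
open Matrix

/-!
Put `P = H₂ᵀH₂` and `Q = H₄ᵀH₄`. Multiplying by `H₂` on the left and `H₂ᵀ` on the right turns the
genie equation into `A G⁻¹ Aᵀ = M` with `M = 1 - H₂ Q⁻¹ H₂ᵀ`. As `A` is invertible, this has a
positive definite solution iff `M` is positive definite, and then only `G = Aᵀ M⁻¹ A`. Since
`M = H₂ (P⁻¹ - Q⁻¹) H₂ᵀ`, positivity of `M` is `Q⁻¹ ≺ P⁻¹`, which is equivalent to `P ≺ Q` because
inversion reverses the strict Loewner order.
-/

section CommRing

variable {ι R : Type*} [Fintype ι] [DecidableEq ι] [CommRing R]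

lemma eq_inv_mul_mul_inv_iff {U V : Matrix ι ι R} (hU : IsUnit U) (hV : IsUnit V)
    (X Y : Matrix ι ι R) : X = U⁻¹ * Y * V⁻¹ ↔ U * X * V = Y := by
  have := hU.invertible
  have := hV.invertible
  rw [eq_comm, mul_inv_eq_iff_eq_mul_of_invertible, inv_mul_eq_iff_eq_mul_of_invertible, eq_comm,
    mul_assoc]

lemma mul_inv_mul_inv_mul_cancel {B C G : Matrix ι ι R}
    (hB : IsUnit B) (hC : IsUnit C) (hG : IsUnit G) : C * (B * G⁻¹ * C)⁻¹ * B = G := by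
  have := hB.invertible
  have := hC.invertible
  have := hG.invertible
  simp only [Matrix.mul_inv_rev, inv_inv_of_invertible, ← mul_assoc,
    inv_mul_cancel_right_of_invertible, mul_inv_of_invertible, one_mul]

lemma mul_inv_gram_sub_inv_gram_mul_conjTranspose [StarRing R] {H : Matrix ι ι R} (hH : IsUnit H)
    (L : Matrix ι ι R) :
    H * ((Hᴴ * H)⁻¹ - (Lᴴ * L)⁻¹) * Hᴴ = 1 - H * L⁻¹ * (L⁻¹)ᴴ * Hᴴ := by
  have := hH.invertible
  simp only [Matrix.mul_inv_rev, conjTranspose_nonsing_inv, mul_sub, sub_mul, ← mul_assoc,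
    mul_inv_of_invertible, one_mul, inv_mul_of_invertible]

end CommRing

section PosDef

variable {ι K : Type*} [Fintype ι] [DecidableEq ι] [Field K] [StarRing K] [PartialOrder K]

lemma posDef_and_mul_inv_mul_conjTranspose_eq_iff {B : Matrix ι ι K} (hB : IsUnit B)
    (G M : Matrix ι ι K) :
    G.PosDef ∧ B * G⁻¹ * Bᴴ = M ↔ M.PosDef ∧ G = Bᴴ * M⁻¹ * B := by
  constructor
  · rintro ⟨hG, rfl⟩
    exact ⟨(IsUnit.posDef_star_right_conjugate_iff hB).2 hG.inv,
      (mul_inv_mul_inv_mul_cancel hB hB.star hG.isUnit).symm⟩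
  · rintro ⟨hM, rfl⟩
    exact ⟨(IsUnit.posDef_star_left_conjugate_iff hB).2 hM.inv,
      mul_inv_mul_inv_mul_cancel hB.star hB hM.isUnit⟩

variable [StarOrderedRing K]

lemma posDef_inv_sub_inv {P Q : Matrix ι ι K} (hP : P.PosDef) (hPQ : (Q - P).PosDef) :
    (P⁻¹ - Q⁻¹).PosDef := by
  have hS : ((Q - P)⁻¹ + P⁻¹).PosDef := hPQ.inv.add hP.inv
  have woodbury : P⁻¹ - Q⁻¹ = P⁻¹ * ((Q - P)⁻¹ + P⁻¹)⁻¹ * (P⁻¹)ᴴ := by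
    have h := add_mul_mul_inv_eq_sub P 1 (Q - P) 1 hP.isUnit hPQ.isUnit
      (by simpa only [one_mul, mul_one] using hS.isUnit)
    simp only [one_mul, mul_one, add_sub_cancel] at h
    rw [h, sub_sub_cancel, hP.inv.isHermitian.eq]
  rw [woodbury]
  exact (IsUnit.posDef_star_right_conjugate_iff hP.inv.isUnit).2 hS.inv

lemma posDef_inv_sub_inv_iff {P Q : Matrix ι ι K} (hP : P.PosDef) (hQ : Q.PosDef) :
    (P⁻¹ - Q⁻¹).PosDef ↔ (Q - P).PosDef := by
  refine ⟨fun h => ?_, posDef_inv_sub_inv hP⟩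
  have := hP.isUnit.invertible
  have := hQ.isUnit.invertible
  simpa only [inv_inv_of_invertible] using posDef_inv_sub_inv hQ.inv h

lemma posDef_one_sub_mul_inv_iff_posDef_gram_sub_gram {H L : Matrix ι ι K}
    (hH : IsUnit H) (hL : IsUnit L) :
    (1 - H * L⁻¹ * (L⁻¹)ᴴ * Hᴴ).PosDef ↔ (Lᴴ * L - Hᴴ * H).PosDef := by
  have gram_posDef {U : Matrix ι ι K} (hU : IsUnit U) : (Uᴴ * U).PosDef :=
    .conjTranspose_mul_self U (mulVec_injective_of_isUnit hU)
  rw [← mul_inv_gram_sub_inv_gram_mul_conjTranspose hH]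
  exact (IsUnit.posDef_star_right_conjugate_iff hH).trans
    (posDef_inv_sub_inv_iff (gram_posDef hH) (gram_posDef hL))

lemma posDef_one_add_mul_mul_conjTranspose {m n : Type*} [Finite m] [DecidableEq m] [Fintype n]
    {S : Matrix n n K} (hS : S.PosSemidef) (H : Matrix m n K) : (1 + H * S * Hᴴ).PosDef :=
  PosDef.one.add_posSemidef (hS.mul_mul_conjTranspose_same H)

theorem genie_exists_iff_weak_interference_general {H₂ H₄ A : Matrix ι ι K}
    (hH₂ : IsUnit H₂) (hH₄ : IsUnit H₄) (hA : IsUnit A) (G : Matrix ι ι K) :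
    (G.PosDef ∧ H₄⁻¹ * (H₄⁻¹)ᴴ = H₂⁻¹ * (1 - A * G⁻¹ * Aᴴ) * (H₂⁻¹)ᴴ) ↔
      (H₄ᴴ * H₄ - H₂ᴴ * H₂).PosDef ∧
        G = Aᴴ * (1 - H₂ * H₄⁻¹ * (H₄⁻¹)ᴴ * H₂ᴴ)⁻¹ * A := by
  have genie_eq_iff :
      H₄⁻¹ * (H₄⁻¹)ᴴ = H₂⁻¹ * (1 - A * G⁻¹ * Aᴴ) * (H₂⁻¹)ᴴ ↔
        A * G⁻¹ * Aᴴ = 1 - H₂ * H₄⁻¹ * (H₄⁻¹)ᴴ * H₂ᴴ := by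
    rw [conjTranspose_nonsing_inv H₂, eq_inv_mul_mul_inv_iff hH₂ ((isUnit_conjTranspose H₂).2 hH₂),
      eq_sub_iff_add_eq, eq_sub_iff_add_eq', mul_assoc H₂ H₄⁻¹]
  rw [genie_eq_iff, posDef_and_mul_inv_mul_conjTranspose_eq_iff hA,
    posDef_one_sub_mul_inv_iff_posDef_gram_sub_gram hH₂ hH₄]

end PosDef

/-- Equations (60)–(66) in the genie-aided proof of Theorem 3: a symmetric positive
definite genie covariance `Σ` (here `G`) with
`H₄⁻¹H₄⁻ᵀ = H₂⁻¹(I − AG⁻¹Aᵀ)H₂⁻ᵀ` exists iff `H₂ᵀH₂ ≺ H₄ᵀH₄`, in which case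
`G = Aᵀ(I − H₂H₄⁻¹H₄⁻ᵀH₂ᵀ)⁻¹A` is such a solution, where `A = I + H₂S₂H₂ᵀ`. -/
theorem genie_exists_iff_weak_interference (n : ℕ) (hn : 0 < n)
    (H₂ H₄ : Matrix (Fin n) (Fin n) ℝ) (hH₂ : IsUnit H₂) (hH₄ : IsUnit H₄)
    (S₂ : Matrix (Fin n) (Fin n) ℝ) (hS₂ : S₂.PosSemidef) :
    let A : Matrix (Fin n) (Fin n) ℝ := 1 + H₂ * S₂ * H₂ᵀ
    ((∃ G : Matrix (Fin n) (Fin n) ℝ, G.PosDef ∧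
        H₄⁻¹ * (H₄⁻¹)ᵀ = H₂⁻¹ * (1 - A * G⁻¹ * Aᵀ) * (H₂⁻¹)ᵀ) ↔
      (H₄ᵀ * H₄ - H₂ᵀ * H₂).PosDef) ∧
    ((H₄ᵀ * H₄ - H₂ᵀ * H₂).PosDef →
      (Aᵀ * ((1 : Matrix (Fin n) (Fin n) ℝ) - H₂ * H₄⁻¹ * (H₄⁻¹)ᵀ * H₂ᵀ)⁻¹ * A).PosDef ∧
        H₄⁻¹ * (H₄⁻¹)ᵀ = H₂⁻¹ *
          (1 - A * (Aᵀ * ((1 : Matrix (Fin n) (Fin n) ℝ) - H₂ * H₄⁻¹ * (H₄⁻¹)ᵀ * H₂ᵀ)⁻¹ * A)⁻¹ * Aᵀ) *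
          (H₂⁻¹)ᵀ) := by
  intro A
  have hA : A.PosDef := by
    simpa only [conjTranspose_eq_transpose_of_trivial] using
      posDef_one_add_mul_mul_conjTranspose hS₂ H₂
  have genie_iff := genie_exists_iff_weak_interference_general hH₂ hH₄ hA.isUnit
  simp only [conjTranspose_eq_transpose_of_trivial] at genie_iff
  exact ⟨⟨fun ⟨G, hG⟩ => ((genie_iff G).1 hG).1, fun h => ⟨_, (genie_iff _).2 ⟨h, rfl⟩⟩⟩,
    fun h => (genie_iff _).2 ⟨h, rfl⟩⟩
end

section
/- Let B and C be symmetric positive semidefinite real n×n matrices. Then det( I + B (I + C)⁻¹ ) ≤ det( I + B ). (Here I + C is positive definite, hence invertible.) -/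
open Matrix

/-!
Write `B = KᴴK`. By the Weinstein–Aronszajn identity `det (1 + B M) = det (1 + K M Kᴴ)`, and the
right-hand side is monotone in `M` for the Loewner order, because congruence and the determinant of
positive semidefinite matrices are. Inversion reverses the Loewner order, so `(1 + C)⁻¹ ≤ 1`.
-/

section LoewnerOrder

open scoped ComplexOrder MatrixOrder

variable {ι 𝕜 : Type*} [Fintype ι] [DecidableEq ι] [RCLike 𝕜] {A B C M N : Matrix ι ι 𝕜}

theorem one_le_det_of_one_le (h : 1 ≤ A) : 1 ≤ A.det := by
  have hA : A.PosSemidef := (PosSemidef.one.nonneg.trans h).posSemidef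
  have one_le_eigenvalues (i : ι) : 1 ≤ hA.isHermitian.eigenvalues i :=
    (CFC.one_le_iff (R := ℝ) A hA.isHermitian).mp h _
      (hA.isHermitian.eigenvalues_mem_spectrum_real i)
  rw [hA.isHermitian.det_eq_prod_eigenvalues]
  exact_mod_cast Finset.one_le_prod fun i _ ↦ one_le_eigenvalues i

theorem det_le_det_of_posDef (hA : A.PosDef) (h : A ≤ B) : A.det ≤ B.det := by
  obtain ⟨K, rfl⟩ := CStarAlgebra.nonneg_iff_eq_star_mul_self.mp hA.posSemidef.nonneg
  have hK : IsUnit K.det := by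
    have hdet := hA.det_pos.ne'
    rw [det_mul] at hdet
    exact (right_ne_zero_of_mul hdet).isUnit
  have hK_star : star K⁻¹ * star K = 1 := by rw [← star_mul, mul_nonsing_inv K hK, star_one]
  have one_le_congr : 1 ≤ star K⁻¹ * B * K⁻¹ := by
    calc
      1 = star K⁻¹ * (star K * K) * K⁻¹ := by
        rw [← mul_assoc, hK_star, one_mul, mul_nonsing_inv K hK]
      _ ≤ star K⁻¹ * B * K⁻¹ := star_left_conjugate_le_conjugate h K⁻¹
  calc
    (star K * K).det ≤ (star K * K).det * (star K⁻¹ * B * K⁻¹).det :=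
      le_mul_of_one_le_right hA.det_pos.le (one_le_det_of_one_le one_le_congr)
    _ = (star K⁻¹ * star K).det * B.det * (K⁻¹ * K).det := by simp only [det_mul]; ring
    _ = B.det := by rw [hK_star, nonsing_inv_mul K hK, det_one, one_mul, mul_one]

theorem det_le_det_of_posSemidef (hA : A.PosSemidef) (h : A ≤ B) : A.det ≤ B.det := by
  by_cases hdet : A.det = 0
  · rw [hdet]
    exact (hA.nonneg.trans h).posSemidef.det_nonneg
  · exact det_le_det_of_posDef (hA.posDef_iff_det_ne_zero.mpr hdet) h

-- Both inequalities are Schur complement conditions for the block matrix `[[B, 1], [1, A⁻¹]]`.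
theorem inv_le_inv_of_posDef (hA : A.PosDef) (h : A ≤ B) : B⁻¹ ≤ A⁻¹ := by
  have hB : B.PosDef := by simpa using hA.add_posSemidef (le_iff.mp h)
  let := hB.isUnit.invertible
  let := hA.inv.isUnit.invertible
  have schur_left := PosDef.fromBlocks₁₁ 1 A⁻¹ hB
  have schur_right := PosDef.fromBlocks₂₂ B 1 hA.inv
  have hA_inv : A⁻¹⁻¹ = A := nonsing_inv_nonsing_inv A hA.det_pos.ne'.isUnit
  simp only [conjTranspose_one, one_mul, mul_one, hA_inv] at schur_left schur_right
  exact schur_left.mp (schur_right.mpr h)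

theorem det_one_add_mul_le_det_one_add_mul (hB : B.PosSemidef) (hM : M.PosSemidef) (h : M ≤ N) :
    (1 + B * M).det ≤ (1 + B * N).det := by
  obtain ⟨K, rfl⟩ := CStarAlgebra.nonneg_iff_eq_star_mul_self.mp hB.nonneg
  have det_congr (X : Matrix ι ι 𝕜) : (1 + star K * K * X).det = (1 + K * X * star K).det := by
    rw [mul_assoc, det_one_add_mul_comm]
  rw [det_congr, det_congr]
  exact det_le_det_of_posSemidef (PosSemidef.one.add (hM.mul_mul_conjTranspose_same K))
    (add_le_add_right (star_right_conjugate_le_conjugate h K) 1)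

theorem det_one_add_mul_inv_le_general (hB : B.PosSemidef) (hC : C.PosSemidef) :
    (1 + B * (1 + C)⁻¹).det ≤ (1 + B).det := by
  have inv_posSemidef : (1 + C)⁻¹.PosSemidef := (PosSemidef.one.add hC).inv
  have inv_le_one : (1 + C)⁻¹ ≤ 1 := by
    simpa using inv_le_inv_of_posDef PosDef.one (le_add_of_nonneg_right hC.nonneg)
  simpa using det_one_add_mul_le_det_one_add_mul hB inv_posSemidef inv_le_one

end LoewnerOrder

/-- Step in the proof of Theorem 5 (mixed interference): for positive semidefinite
`B` and `C`, `det(I + B(I + C)⁻¹) ≤ det(I + B)`. -/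
theorem det_one_add_mul_inv_le (n : ℕ) (hn : 0 < n)
    (B C : Matrix (Fin n) (Fin n) ℝ) (hB : B.PosSemidef) (hC : C.PosSemidef) :
    ((1 : Matrix (Fin n) (Fin n) ℝ) + B * (1 + C)⁻¹).det ≤
      ((1 : Matrix (Fin n) (Fin n) ℝ) + B).det :=
  det_one_add_mul_inv_le_general hB hC
end

section
/- Let u and v be positive real numbers. There exist real numbers σ₁ > 0 and σ₂ > 0 satisfying σ₁ ≤ 1 − v²/σ₂ and σ₂ ≤ 1 − u²/σ₁ if and only if u + v ≤ 1. -/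
/-!
Clearing denominators, the two conditions read `v² ≤ (1 - σ₁) σ₂` and `u² ≤ (1 - σ₂) σ₁`. By AM-GM
they give `2|v| ≤ (1 - σ₁) + σ₂` and `2|u| ≤ (1 - σ₂) + σ₁`, whose sum is `|u| + |v| ≤ 1`.
Conversely, on the line `σ₁ + σ₂ = 1` the conditions become `v² ≤ σ₂²` and `u² ≤ σ₁²`, so any
splitting of `1` into positive parts `σ₁ ≥ |u|` and `σ₂ ≥ |v|` satisfies them. The strict bounds
`|u| < 1` and `|v| < 1` keep both parts positive when `u` or `v` vanishes.
-/

section LinearOrderedField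

variable {K : Type*} [Field K] [LinearOrder K] [IsStrictOrderedRing K]

theorem le_sub_div_iff {c x σ τ : K} (hτ : 0 < τ) : σ ≤ c - x / τ ↔ x ≤ (c - σ) * τ := by
  rw [le_sub_comm, div_le_iff₀ hτ]

theorem le_of_le_sub_sq_div {c x σ τ : K} (hτ : 0 ≤ τ) (h : σ ≤ c - x ^ 2 / τ) : σ ≤ c :=
  h.trans (sub_le_self c (by positivity))

theorem two_mul_abs_le_of_le_sub_sq_div {c x σ τ : K} (hτ : 0 < τ) (h : σ ≤ c - x ^ 2 / τ) :
    2 * |x| ≤ c - σ + τ := by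
  have hσ : 0 ≤ c - σ := sub_nonneg.2 (le_of_le_sub_sq_div hτ.le h)
  have hsq : |x| ^ 2 ≤ (c - σ) * τ := by rwa [sq_abs, ← le_sub_div_iff hτ]
  exact two_mul_le_add_of_sq_le_mul hσ hτ.le hsq

theorem le_sub_sq_div_of_add_eq {c x σ τ : K} (hτ : 0 < τ) (hadd : σ + τ = c) (hx : |x| ≤ τ) :
    σ ≤ c - x ^ 2 / τ := by
  rw [le_sub_div_iff hτ, ← eq_sub_of_add_eq' hadd, ← sq]
  exact sq_le_sq.2 (hx.trans (le_abs_self τ))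

theorem exists_pos_add_eq_of_add_le {a b c : K} (ha : 0 ≤ a) (hb : 0 ≤ b) (hac : a < c)
    (hbc : b < c) (hab : a + b ≤ c) :
    ∃ σ τ : K, 0 < σ ∧ 0 < τ ∧ σ + τ = c ∧ a ≤ σ ∧ b ≤ τ :=
  ⟨(c + a - b) / 2, (c - a + b) / 2, by linarith, by linarith, by ring, by linarith, by linarith⟩

theorem scalar_theorem2_condition_general (u v : K) :
    (∃ σ₁ σ₂ : K, 0 < σ₁ ∧ 0 < σ₂ ∧ σ₁ ≤ 1 - v ^ 2 / σ₂ ∧ σ₂ ≤ 1 - u ^ 2 / σ₁) ↔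
      |u| + |v| ≤ 1 ∧ |u| < 1 ∧ |v| < 1 := by
  constructor
  · rintro ⟨σ₁, σ₂, hσ₁, hσ₂, h₁, h₂⟩
    have hv : 2 * |v| ≤ 1 - σ₁ + σ₂ := two_mul_abs_le_of_le_sub_sq_div hσ₂ h₁
    have hu : 2 * |u| ≤ 1 - σ₂ + σ₁ := two_mul_abs_le_of_le_sub_sq_div hσ₁ h₂
    have hσ₁_le : σ₁ ≤ 1 := le_of_le_sub_sq_div hσ₂.le h₁
    have hσ₂_le : σ₂ ≤ 1 := le_of_le_sub_sq_div hσ₁.le h₂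
    exact ⟨by linarith, by linarith, by linarith⟩
  · rintro ⟨huv, hu, hv⟩
    obtain ⟨σ₁, σ₂, hσ₁, hσ₂, hadd, huσ, hvσ⟩ :=
      exists_pos_add_eq_of_add_le (abs_nonneg u) (abs_nonneg v) hu hv huv
    exact ⟨σ₁, σ₂, hσ₁, hσ₂, le_sub_sq_div_of_add_eq hσ₂ hadd hvσ,
      le_sub_sq_div_of_add_eq hσ₁ (by rwa [add_comm]) huσ⟩

end LinearOrderedField

/-- Scalar specialization of Theorem 2: positive `σ₁, σ₂` with
`σ₁ ≤ 1 − v²/σ₂` and `σ₂ ≤ 1 − u²/σ₁` exist iff `u + v ≤ 1`. -/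
theorem scalar_theorem2_condition (u v : ℝ) (hu : 0 < u) (hv : 0 < v) :
    (∃ σ₁ σ₂ : ℝ, 0 < σ₁ ∧ 0 < σ₂ ∧ σ₁ ≤ 1 - v ^ 2 / σ₂ ∧ σ₂ ≤ 1 - u ^ 2 / σ₁) ↔
      u + v ≤ 1 := by
  rw [scalar_theorem2_condition_general, abs_of_pos hu, abs_of_pos hv]
  exact ⟨And.left, fun h ↦ ⟨h, by linarith, by linarith⟩⟩
end
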